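/- For positive integers n, m, k with k ≥ 1, the number of ways of expressing n as a sum modulo m of k integers from the set {0,1,...,m-1} (repetitions allowed, order disregarded) equals (1/m) · Σ_{d | gcd(m,k)} binom((m+k-d)/d, k/d) · C_d(n), where C_d(n) = Σ_{j: gcd(j,d)=1, 1≤j≤d} e^{2πijn/d} is the Ramanujan sum. -/

import Mathlib

open Finset

/-- The Ramanujan sum `C_d(n) = Σ_{1 ≤ j ≤ d, gcd(j,d)=1} e^{2πijn/d}`. -/
noncomputable def ramanujanSum (d n : ℕ) : ℂ :=
  ∑ j ∈ (Finset.Icc 1 d).filter (fun j => Nat.Coprime j d),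
    Complex.exp (2 * Real.pi * Complex.I * j * n / d)

/-!
Orthogonality of the characters `χ` of a finite abelian group `G` reduces the count to the sums
`∑ χ(sum of s)` over the multisets `s` of size `k`. Such a sum is the `k`-th coefficient of
`∏_{g ∈ G} 1 / (1 - χ(g) X)`. If `χ` has order `d`, it takes every `d`-th root of unity as a value
equally often, so this product is `(1 - X ^ d) ^ (-|G| / d)` and depends on `d` only. For
`G = ℤ/mℤ` the characters of order `d` correspond, through their values at `1`, to the primitive
`d`-th roots of unity, whose `n`-th powers sum to `C_d(n)`.
-/

section GeneratingFunctions

open PowerSeries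

lemma sum_sym_prod_map_eq_coeff {α R : Type*} [Fintype α] [DecidableEq α] [CommSemiring R]
    (f : α → R) (k : ℕ) :
    ∑ s : Sym α k, ((s : Multiset α).map f).prod =
      coeff k (∏ a, PowerSeries.mk fun i ↦ f a ^ i) := by
  simp only [coeff_prod, coeff_mk]
  refine sum_bij (fun s _ ↦ Multiset.toFinsupp (s : Multiset α)) (fun s _ ↦ ?_)
    (fun s _ t _ h ↦ Sym.coe_injective (Multiset.toFinsupp.injective h)) (fun b hb ↦ ?_)
    (fun s _ ↦ ?_)
  · refine mem_finsuppAntidiag.2 ⟨?_, subset_univ _⟩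
    change ∑ a, (s : Multiset α).count a = k
    rw [Multiset.sum_count_eq_card fun a _ ↦ mem_univ a, Sym.card_coe]
  · have card_b : (Finsupp.toMultiset b).card = k := by
      rw [Finsupp.card_toMultiset, Finsupp.sum_fintype _ _ fun _ ↦ rfl]
      exact (mem_finsuppAntidiag.1 hb).1
    exact ⟨⟨Finsupp.toMultiset b, card_b⟩, mem_univ _, Finsupp.toMultiset_toFinsupp b⟩
  · simp only [Multiset.toFinsupp_apply, prod_multiset_map_count]
    exact prod_subset (subset_univ _) fun a _ ha ↦ by
      rw [Multiset.count_eq_zero.2 (by simpa using ha), pow_zero]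

variable {R : Type*} [CommRing R]

lemma mk_pow_mul_one_sub_C_mul_X (c : R) :
    (PowerSeries.mk fun i ↦ c ^ i) * (1 - C c * X) = 1 := by
  simpa [rescale_mk, rescale_X] using congrArg (rescale c) (mk_one_mul_one_sub_eq_one R)

lemma mk_multichoose_mul_one_sub_pow_eq_one (e : ℕ) :
    (PowerSeries.mk fun i ↦ (e.multichoose i : R)) * (1 - X) ^ e = 1 := by
  have mk_multichoose : (PowerSeries.mk fun i ↦ (e.multichoose i : R)) = PowerSeries.mk 1 ^ e := by
    ext k
    simpa [Sym.card_sym_eq_multichoose, Pi.one_def] using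
      sum_sym_prod_map_eq_coeff (fun _ : Fin e ↦ (1 : R)) k
  rw [mk_multichoose, ← mul_pow, mk_one_mul_one_sub_eq_one, one_pow]

lemma coeff_of_mul_one_sub_X_pow_pow_eq_one {d e : ℕ} (hd : d ≠ 0) {P : R⟦X⟧}
    (hP : P * (1 - X ^ d) ^ e = 1) (k : ℕ) :
    coeff k P = if d ∣ k then (e.multichoose (k / d) : R) else 0 := by
  set Q : R⟦X⟧ := expand d hd (PowerSeries.mk fun i ↦ (e.multichoose i : R)) with hQ
  have hQ_inv : Q * (1 - X ^ d) ^ e = 1 := by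
    simpa using congrArg (expand d hd) (mk_multichoose_mul_one_sub_pow_eq_one (R := R) e)
  have hPQ : P = Q :=
    (IsUnit.of_mul_eq_one_right _ hQ_inv).mul_left_injective (hP.trans hQ_inv.symm)
  rw [hPQ, hQ, coeff_expand]
  simp

lemma prod_nthRootsFinset_one_sub_C_mul_X [IsDomain R] {ζ : R} {d : ℕ} (hd : 0 < d)
    (hζ : IsPrimitiveRoot ζ d) :
    ∏ z ∈ Polynomial.nthRootsFinset d (1 : R), (1 - C z * X) = 1 - X ^ d := by
  have hCζ : IsPrimitiveRoot (C ζ) d := hζ.map_of_injective C_injective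
  have map_nthRoots : (Polynomial.nthRootsFinset d (1 : R)).map ⟨C, C_injective⟩ =
      Polynomial.nthRootsFinset d (1 : R⟦X⟧) := by
    refine eq_of_subset_of_card_le (fun w hw ↦ ?_) ?_
    · obtain ⟨z, hz, rfl⟩ := mem_map.1 hw
      exact Polynomial.map_mem_nthRootsFinset_one hz C
    · rw [card_map, hζ.card_nthRootsFinset, hCζ.card_nthRootsFinset]
  have factorization := hCζ.pow_sub_pow_eq_prod_sub_mul 1 X hd
  rw [one_pow, ← map_nthRoots, prod_map] at factorization
  exact factorization.symm

end GeneratingFunctions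

section Characters

lemma addChar_apply_multiset_sum {A M : Type*} [AddCommMonoid A] [CommMonoid M] (χ : AddChar A M)
    (s : Multiset A) : χ s.sum = (s.map χ).prod :=
  χ.toAddMonoidHom.map_multiset_sum s

variable {G : Type*} [AddCommGroup G]

lemma orderOf_addChar_dvd_card {M : Type*} [CommMonoid M] (χ : AddChar G M) :
    orderOf χ ∣ Nat.card G := by
  refine orderOf_dvd_of_pow_eq_one (AddChar.ext _ _ fun g ↦ ?_)
  rw [AddChar.pow_apply, ← AddChar.map_nsmul_eq_pow, card_nsmul_eq_zero', AddChar.map_zero_eq_one,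
    AddChar.one_apply]

variable {R : Type*} [CommRing R] [IsDomain R]

section Finite

variable [Finite G]

lemma orderOf_addChar_pos {M : Type*} [CommMonoid M] (χ : AddChar G M) : 0 < orderOf χ :=
  Nat.pos_of_dvd_of_pos (orderOf_addChar_dvd_card χ) Nat.card_pos

lemma exists_isPrimitiveRoot_addChar_apply (χ : AddChar G R) :
    ∃ g, IsPrimitiveRoot (χ g) (orderOf χ) := by
  let φ : Multiplicative G →* Rˣ := χ.toMonoidHom.toHomUnits
  have : Finite φ.range := Set.finite_range φ
  obtain ⟨⟨_, g, rfl⟩, hg⟩ := IsCyclic.exists_generator (α := φ.range)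
  refine ⟨g.toAdd, ?_, fun l hl ↦ orderOf_dvd_of_pow_eq_one (AddChar.ext _ _ fun x ↦ ?_)⟩
  · rw [← AddChar.pow_apply, pow_orderOf_eq_one, AddChar.one_apply]
  · obtain ⟨n, hn⟩ := hg ⟨φ (.ofAdd x), .ofAdd x, rfl⟩
    have x_eq : φ g ^ n = φ (.ofAdd x) := congrArg Subtype.val hn
    have hφl : φ g ^ l = 1 := Units.ext hl
    have hφx : φ (.ofAdd x) ^ l = 1 := by
      rw [← x_eq, ← zpow_natCast, zpow_comm, zpow_natCast, hφl, one_zpow]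
    exact congrArg Units.val hφx

lemma addChar_apply_mem_nthRootsFinset (χ : AddChar G R) (g : G) :
    χ g ∈ Polynomial.nthRootsFinset (orderOf χ) (1 : R) := by
  rw [Polynomial.mem_nthRootsFinset (orderOf_addChar_pos χ), ← AddChar.pow_apply,
    pow_orderOf_eq_one, AddChar.one_apply]

lemma mem_range_addChar_of_mem_nthRootsFinset (χ : AddChar G R) {z : R}
    (hz : z ∈ Polynomial.nthRootsFinset (orderOf χ) (1 : R)) : z ∈ Set.range χ := by
  obtain ⟨g, hg⟩ := exists_isPrimitiveRoot_addChar_apply χ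
  have : NeZero (orderOf χ) := ⟨(orderOf_addChar_pos χ).ne'⟩
  rw [Polynomial.mem_nthRootsFinset (orderOf_addChar_pos χ)] at hz
  obtain ⟨i, -, rfl⟩ := hg.eq_pow_of_pow_eq_one hz
  exact ⟨i • g, AddChar.map_nsmul_eq_pow χ i g⟩

end Finite

variable [Fintype G]

lemma card_filter_addChar_apply_eq [DecidableEq R] (χ : AddChar G R) {z : R}
    (hz : z ∈ Polynomial.nthRootsFinset (orderOf χ) (1 : R)) :
    #{g | χ g = z} = Fintype.card G / orderOf χ := by
  obtain ⟨g, hg⟩ := exists_isPrimitiveRoot_addChar_apply χ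
  have fibers_equicard : ∀ w ∈ Polynomial.nthRootsFinset (orderOf χ) (1 : R),
      #{g | χ g = w} = #{g | χ g = z} := fun w hw ↦
    AddMonoidHom.card_fiber_eq_of_mem_range χ.toAddMonoidHom
      (mem_range_addChar_of_mem_nthRootsFinset χ hw) (mem_range_addChar_of_mem_nthRootsFinset χ hz)
  have card_eq : Fintype.card G = orderOf χ * #{g | χ g = z} := by
    rw [← card_univ, card_eq_sum_card_fiberwise fun g _ ↦ addChar_apply_mem_nthRootsFinset χ g,
      sum_congr rfl fibers_equicard, sum_const, hg.card_nthRootsFinset, smul_eq_mul]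
  rw [card_eq, Nat.mul_div_cancel_left _ (orderOf_addChar_pos χ)]

lemma prod_addChar_apply_eq {M : Type*} [CommMonoid M] (χ : AddChar G R) (F : R → M) :
    ∏ g, F (χ g) =
      (∏ z ∈ Polynomial.nthRootsFinset (orderOf χ) (1 : R), F z) ^
        (Fintype.card G / orderOf χ) := by
  classical
  rw [← prod_fiberwise_of_maps_to' (fun g _ ↦ addChar_apply_mem_nthRootsFinset χ g), ← prod_pow]
  refine prod_congr rfl fun z hz ↦ ?_
  rw [prod_const, card_filter_addChar_apply_eq χ hz]

open PowerSeries in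
lemma sum_sym_addChar_apply_sum [DecidableEq G] (χ : AddChar G R) (k : ℕ) :
    ∑ s : Sym G k, χ (s : Multiset G).sum =
      if orderOf χ ∣ k then
        ((Fintype.card G / orderOf χ).multichoose (k / orderOf χ) : R) else 0 := by
  obtain ⟨g, hg⟩ := exists_isPrimitiveRoot_addChar_apply χ
  have prod_mul_eq_one : (∏ g, PowerSeries.mk fun i ↦ χ g ^ i) *
      (1 - X ^ orderOf χ) ^ (Fintype.card G / orderOf χ) = 1 := by
    rw [← prod_nthRootsFinset_one_sub_C_mul_X (orderOf_addChar_pos χ) hg,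
      ← prod_addChar_apply_eq χ fun z ↦ 1 - C z * X, ← prod_mul_distrib]
    exact prod_eq_one fun g _ ↦ mk_pow_mul_one_sub_C_mul_X (χ g)
  simp only [addChar_apply_multiset_sum, sum_sym_prod_map_eq_coeff]
  exact coeff_of_mul_one_sub_X_pow_pow_eq_one (orderOf_addChar_pos χ).ne' prod_mul_eq_one k

end Characters

lemma card_mul_card_fiber_eq_sum_addChar {G ι : Type*} [AddCommGroup G] [Fintype G] [Fintype ι]
    (f : ι → G) (g : G) :
    (Fintype.card G * Nat.card {i // f i = g} : ℂ) =
      ∑ χ : AddChar G ℂ, χ g * ∑ i, χ⁻¹ (f i) := by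
  classical
  simp only [mul_sum, AddChar.inv_apply, ← AddChar.map_add_eq_mul, ← sub_eq_add_neg]
  rw [sum_comm]
  simp only [AddChar.sum_apply_eq_ite, sub_eq_zero, eq_comm (a := g), ← sum_filter, sum_const,
    Nat.card_eq_fintype_card, Fintype.card_subtype, nsmul_eq_mul, mul_comm]

lemma choose_eq_multichoose_div {d m k : ℕ} (hd : 0 < d) (hm : d ∣ m) (hk : d ∣ k) :
    ((m + k - d) / d).choose (k / d) = (m / d).multichoose (k / d) := by
  obtain ⟨a, rfl⟩ := hm
  obtain ⟨b, rfl⟩ := hk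
  rw [← Nat.mul_add, ← Nat.mul_sub_one]
  simp only [Nat.mul_div_cancel_left _ hd, Nat.multichoose_eq]

theorem von_sterneck_general {G : Type*} [AddCommGroup G] [Fintype G] (g : G) (k : ℕ) :
    (Nat.card {s : Sym G k // (s : Multiset G).sum = g} : ℂ) =
      (1 / Fintype.card G) * ∑ d ∈ (Nat.gcd (Fintype.card G) k).divisors,
        (Nat.choose ((Fintype.card G + k - d) / d) (k / d) : ℂ) *
          ∑ χ : AddChar G ℂ with orderOf χ = d, χ g := by
  classical
  have card_ne_zero : (Fintype.card G : ℂ) ≠ 0 := Nat.cast_ne_zero.2 Fintype.card_ne_zero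
  rw [one_div, eq_inv_mul_iff_mul_eq₀ card_ne_zero, card_mul_card_fiber_eq_sum_addChar]
  have mem_divisors_iff (χ : AddChar G ℂ) :
      orderOf χ ∈ (Nat.gcd (Fintype.card G) k).divisors ↔ orderOf χ ∣ k := by
    have order_dvd_card := orderOf_addChar_dvd_card χ
    rw [Nat.card_eq_fintype_card] at order_dvd_card
    simp [Nat.dvd_gcd_iff, order_dvd_card]
  calc
    _ = ∑ χ : AddChar G ℂ with orderOf χ ∈ (Nat.gcd (Fintype.card G) k).divisors,
          χ g * (Fintype.card G / orderOf χ).multichoose (k / orderOf χ) := by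
      simp only [sum_sym_addChar_apply_sum, orderOf_inv, mul_ite, mul_zero, sum_filter,
        mem_divisors_iff]
    _ = ∑ d ∈ (Nat.gcd (Fintype.card G) k).divisors, ∑ χ : AddChar G ℂ with orderOf χ = d,
          χ g * (Fintype.card G / orderOf χ).multichoose (k / orderOf χ) :=
      (sum_fiberwise_eq_sum_filter _ _ _ _).symm
    _ = _ := by
      refine sum_congr rfl fun d hd ↦ ?_
      obtain ⟨hdG, hdk⟩ := Nat.dvd_gcd_iff.1 (Nat.dvd_of_mem_divisors hd)
      rw [choose_eq_multichoose_div (Nat.pos_of_mem_divisors hd) hdG hdk, mul_sum]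
      refine sum_congr rfl fun χ hχ ↦ ?_
      rw [(mem_filter.1 hχ).2, mul_comm]

lemma pow_injOn_Icc_one {M : Type*} [CommMonoid M] {ζ : M} {d : ℕ} (hζ : IsPrimitiveRoot ζ d) :
    Set.InjOn (ζ ^ ·) (Set.Icc 1 d) := by
  intro i hi j hj hij
  simp only [Set.mem_Icc] at hi hj
  have ζ_finite : IsOfFinOrder ζ :=
    isOfFinOrder_iff_pow_eq_one.2 ⟨d, by lia, hζ.pow_eq_one⟩
  have modEq : i ≡ j [MOD d] := by
    have modEq_orderOf := ζ_finite.pow_eq_pow_iff_modEq.1 hij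
    rwa [← hζ.eq_orderOf] at modEq_orderOf
  refine modEq.eq_of_abs_lt ?_
  rw [abs_lt]
  lia

lemma primitiveRoots_eq_image_pow {R : Type*} [CommRing R] [IsDomain R] [DecidableEq R]
    {ζ : R} {d : ℕ} (hζ : IsPrimitiveRoot ζ d) :
    primitiveRoots d R = {j ∈ Icc 1 d | j.Coprime d}.image (ζ ^ ·) := by
  symm
  refine eq_of_subset_of_card_le (fun w hw ↦ ?_) ?_
  · obtain ⟨j, hj, rfl⟩ := mem_image.1 hw
    simp only [mem_filter, mem_Icc] at hj
    exact (mem_primitiveRoots (by lia)).2 (hζ.pow_of_coprime j hj.2)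
  · rw [card_image_of_injOn ((pow_injOn_Icc_one hζ).mono fun j hj ↦ by simp_all),
      hζ.card_primitiveRoots, ← Nat.filter_coprime_Ico_eq_totient d 1]
    simp only [Nat.coprime_comm (m := d), add_comm 1 d, Ico_add_one_right_eq_Icc, le_refl]

lemma ramanujanSum_eq_sum_primitiveRoots (d n : ℕ) :
    ramanujanSum d n = ∑ ζ ∈ primitiveRoots d ℂ, ζ ^ n := by
  rcases eq_or_ne d 0 with rfl | hd
  · simp [ramanujanSum]
  have hζ := Complex.isPrimitiveRoot_exp d hd
  rw [ramanujanSum, primitiveRoots_eq_image_pow hζ,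
    sum_image ((pow_injOn_Icc_one hζ).mono fun j hj ↦ by simp_all)]
  refine sum_congr rfl fun j _ ↦ ?_
  rw [← pow_mul, ← Complex.exp_nat_mul]
  congr 1
  push_cast
  ring

lemma addChar_zmod_apply {m : ℕ} [NeZero m] {M : Type*} [Monoid M] (χ : AddChar (ZMod m) M)
    (x : ZMod m) : χ x = χ 1 ^ x.val := by
  rw [← AddChar.map_nsmul_eq_pow, nsmul_one, ZMod.natCast_zmod_val]

lemma orderOf_addChar_zmod {m : ℕ} [NeZero m] {M : Type*} [CommMonoid M]
    (χ : AddChar (ZMod m) M) : orderOf χ = orderOf (χ 1) :=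
  orderOf_eq_orderOf_iff.2 fun l ↦ by
    rw [← AddChar.pow_apply, ← not_iff_not]
    exact AddChar.zmod_char_ne_one_iff m (χ ^ l)

lemma sum_addChar_zmod_apply_natCast {m d : ℕ} [NeZero m] (hd : d ∣ m) (n : ℕ) :
    ∑ χ : AddChar (ZMod m) ℂ with orderOf χ = d, χ n = ∑ ζ ∈ primitiveRoots d ℂ, ζ ^ n := by
  have hd_pos : 0 < d := Nat.pos_of_dvd_of_pos hd (NeZero.pos m)
  refine sum_nbij (fun χ ↦ χ 1) (fun χ hχ ↦ ?_) (fun χ _ ψ _ h ↦ ?_) (fun ζ hζ ↦ ?_)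
    (fun χ _ ↦ ?_)
  · rw [mem_primitiveRoots hd_pos, IsPrimitiveRoot.iff_orderOf, ← orderOf_addChar_zmod]
    exact (mem_filter.1 hχ).2
  · exact AddChar.ext _ _ fun x ↦ by
      rw [addChar_zmod_apply χ, addChar_zmod_apply ψ]
      exact congrArg (· ^ x.val) h
  · have hζ_prim := (mem_primitiveRoots hd_pos).1 hζ
    have hζ_pow : ζ ^ m = 1 := (hζ_prim.pow_eq_one_iff_dvd m).2 hd
    have apply_one : AddChar.zmodChar m hζ_pow 1 = ζ := by
      simpa using AddChar.zmodChar_apply' hζ_pow 1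
    refine ⟨AddChar.zmodChar m hζ_pow, ?_, apply_one⟩
    simp [orderOf_addChar_zmod, apply_one, hζ_prim.eq_orderOf]
  · rw [← AddChar.map_nsmul_eq_pow, nsmul_one]

/-- Von Sterneck's formula: the number of multisets of size `k` of elements of `ℤ/mℤ`
whose sum is `n` equals `(1/m) Σ_{d | gcd(m,k)} binom((m+k-d)/d, k/d) C_d(n)`. -/
theorem von_sterneck (n m k : ℕ) (hm : 0 < m) (hk : 1 ≤ k) :
    (Nat.card {s : Sym (ZMod m) k // (s : Multiset (ZMod m)).sum = (n : ZMod m)} : ℂ) =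
      (1 / m) * ∑ d ∈ (Nat.gcd m k).divisors,
        (Nat.choose ((m + k - d) / d) (k / d) : ℂ) * ramanujanSum d n := by
  have : NeZero m := ⟨hm.ne'⟩
  rw [von_sterneck_general, ZMod.card]
  exact congrArg _ <| sum_congr rfl fun d hd ↦ by
    rw [sum_addChar_zmod_apply_natCast (Nat.dvd_gcd_iff.1 (Nat.dvd_of_mem_divisors hd)).1,
      ramanujanSum_eq_sum_primitiveRoots]
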